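/- Let q be a positive integer and k ∈ {4q-1, 4q, 4q+1, 4q+2}. The strong fractional choice number of the class Q_k of series-parallel graphs of girth at least k equals 2 + 1/q. That is: (a) for every positive integer m, every G in Q_k is (⌈(2+1/q)m⌉, m)-choosable; and (b) for every real r < 2 + 1/q, there exist a positive integer m and a graph G in Q_k that is not (⌈rm⌉, m)-choosable. -/

import Mathlib

open SimpleGraph

/-- A two-terminal graph: a simple graph together with two terminal vertices. -/
structure TTGraph where
  V : Type
  G : SimpleGraph V
  x : V
  y : V

/-- Vertex type of the parallel composition. -/
def TTGraph.pV (A B : TTGraph) : Type := A.V ⊕ {v : B.V // v ≠ B.x ∧ v ≠ B.y}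

open Classical in
/-- The canonical map from the second graph into the parallel composition. -/
noncomputable def TTGraph.pmap (A B : TTGraph) (v : B.V) : A.pV B :=
  if h1 : v = B.x then Sum.inl A.x
  else if h2 : v = B.y then Sum.inl A.y
  else Sum.inr ⟨v, h1, h2⟩

/-- Parallel composition of two-terminal graphs: identify the two `x`'s and the two `y`'s. -/
noncomputable def TTGraph.parallel (A B : TTGraph) : TTGraph where
  V := A.pV B
  G := SimpleGraph.fromRel (fun u w =>
    (∃ a b, A.G.Adj a b ∧ u = Sum.inl a ∧ w = Sum.inl b) ∨
    (∃ a b, B.G.Adj a b ∧ u = A.pmap B a ∧ w = A.pmap B b))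
  x := Sum.inl A.x
  y := Sum.inl A.y

/-- Vertex type of the series composition. -/
def TTGraph.sV (A B : TTGraph) : Type := A.V ⊕ {v : B.V // v ≠ B.x}

open Classical in
/-- The canonical map from the second graph into the series composition. -/
noncomputable def TTGraph.smap (A B : TTGraph) (v : B.V) : A.sV B :=
  if h1 : v = B.x then Sum.inl A.y else Sum.inr ⟨v, h1⟩

/-- Series composition of two-terminal graphs: identify `y` of the first with `x` of the second. -/
noncomputable def TTGraph.series (A B : TTGraph) : TTGraph where
  V := A.sV B
  G := SimpleGraph.fromRel (fun u w =>
    (∃ a b, A.G.Adj a b ∧ u = Sum.inl a ∧ w = Sum.inl b) ∨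
    (∃ a b, B.G.Adj a b ∧ u = A.smap B a ∧ w = A.smap B b))
  x := Sum.inl A.x
  y := A.smap B B.y

/-- Isomorphism of two-terminal graphs (preserving terminals). -/
def TTGraph.Equiv (A B : TTGraph) : Prop :=
  ∃ e : A.G ≃g B.G, e A.x = B.x ∧ e A.y = B.y

/-- `K₂` with its two vertices as terminals. -/
def K2TT : TTGraph := ⟨Bool, ⊤, false, true⟩

/-- Two-terminal series-parallel graphs, built recursively from `K₂` by
series and parallel compositions (up to terminal-preserving isomorphism). -/
inductive IsSP : TTGraph → Prop
  | k2 (A : TTGraph) : A.Equiv K2TT → IsSP A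
  | parallel (A B C : TTGraph) : IsSP A → IsSP B → C.Equiv (A.parallel B) → IsSP C
  | series (A B C : TTGraph) : IsSP A → IsSP B → C.Equiv (A.series B) → IsSP C

/-- A graph is series-parallel if it is a two-terminal series-parallel graph
for some choice of terminals. -/
def SeriesParallel {V : Type} (G : SimpleGraph V) : Prop :=
  ∃ x y : V, IsSP ⟨V, G, x, y⟩

/-- `G` is `(a, m)`-choosable: every list assignment with lists of size `a`
admits an `m`-fold colouring from the lists with adjacent vertices getting
disjoint colour sets. -/
def Choosable {V : Type} (G : SimpleGraph V) (a m : ℕ) : Prop :=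
  ∀ L : V → Finset ℕ, (∀ v, (L v).card = a) →
    ∃ φ : V → Finset ℕ, (∀ v, φ v ⊆ L v) ∧ (∀ v, (φ v).card = m) ∧
      ∀ u w, G.Adj u w → Disjoint (φ u) (φ w)

/-- `G` is a path graph: it has a Hamiltonian path using all of its edges. -/
def IsPathGraph {V : Type} (G : SimpleGraph V) : Prop :=
  ∃ (u w : V) (p : G.Walk u w), p.IsPath ∧ (∀ v, v ∈ p.support) ∧
    ∀ e ∈ G.edgeSet, e ∈ p.edges

/-- `G` is a cycle graph: it has a Hamiltonian cycle using all of its edges. -/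
def IsCycleGraph {V : Type} (G : SimpleGraph V) : Prop :=
  ∃ (u : V) (p : G.Walk u u), p.IsCycle ∧ (∀ v, v ∈ p.support) ∧
    ∀ e ∈ G.edgeSet, e ∈ p.edges

/-!
Fix lists of size `2 * m + e`. The colours of the two ends of a thread (a path whose interior
vertices have degree two) restrict each other less and less as the thread grows: every two more
edges allow for `e` more colours. With `m ≤ q * e`, a thread with at least `2 * q` edges imposes no
restriction at all. By induction every series-parallel graph of girth at least `4 * q - 1` either
imposes no restriction on its terminals, or at most that of a thread with fewer than `2 * q` edges
which is as long as some path between the terminals; the girth excludes two such threads in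
parallel, apart from single edges.

If `q * e < m` then a thread with `2 * q + 1` edges can forbid a given pair of colour sets at its
ends. Putting one such thread in parallel for each pair forbids all colourings, and every cycle has
length at least `2 * (2 * q + 1)`.
-/

open Finset in
/-- `m`-fold colourings from the lists `L`. -/
structure IsMultiColoring {V α : Type*} (G : SimpleGraph V) (L : V → Finset α) (m : ℕ)
    (φ : V → Finset α) : Prop where
  mem_powersetCard : ∀ v, φ v ∈ (L v).powersetCard m
  disjoint : ∀ ⦃u w⦄, G.Adj u w → Disjoint (φ u) (φ w)

section Threads

open Finset

variable {α : Type*}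

/-- The colours `S` and `T` of the end vertices of a path extend to its interior vertices, whose
lists are, in order, the members of the given list. -/
def ThreadColorable (m : ℕ) : List (Finset α) → Finset α → Finset α → Prop
  | [], S, T => Disjoint S T
  | M :: Ms, S, T => ∃ U ∈ M.powersetCard m, Disjoint S U ∧ ThreadColorable m Ms U T

namespace ThreadColorable

variable {m : ℕ} {S T M : Finset α} {Ms Ns : List (Finset α)}

lemma exists_of_append_cons (h : ThreadColorable m (Ms ++ M :: Ns) S T) :
    ∃ U ∈ M.powersetCard m, ThreadColorable m Ms S U ∧ ThreadColorable m Ns U T := by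
  induction Ms generalizing S with
  | nil => exact h
  | cons N Ms ih =>
    obtain ⟨R, hR, hSR, hRT⟩ := h
    obtain ⟨U, hU, hRU, hUT⟩ := ih hRT
    exact ⟨U, hU, ⟨R, hR, hSR, hRU⟩, hUT⟩

end ThreadColorable

variable {m e q t t' : ℕ} {S T F F' M : Finset α} {Ms : List (Finset α)}

lemma exists_mem_powersetCard_disjoint (hM : m + #S ≤ #M) :
    ∃ U ∈ M.powersetCard m, Disjoint S U := by
  classical
  have hMS : m ≤ #(M \ S) := by
    have := le_card_sdiff S M
    lia
  obtain ⟨U, hUM, hU⟩ := exists_subset_card_eq hMS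
  exact ⟨U, mem_powersetCard.2 ⟨hUM.trans sdiff_subset, hU⟩,
    disjoint_of_subset_right hUM disjoint_sdiff⟩

lemma exists_threadColorable_left {N : Finset α} (hMs : ∀ M ∈ Ms, 2 * m ≤ #M) (hN : 2 * m ≤ #N)
    (hT : #T = m) : ∃ S ∈ N.powersetCard m, ThreadColorable m Ms S T := by
  induction Ms generalizing N with
  | nil =>
    obtain ⟨S, hS, hTS⟩ := exists_mem_powersetCard_disjoint (S := T) (M := N) (m := m) (by lia)
    exact ⟨S, hS, hTS.symm⟩
  | cons M Ms ih =>
    obtain ⟨hM, hMs⟩ := List.forall_mem_cons.1 hMs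
    obtain ⟨U, hU, hUT⟩ := ih hMs hM
    have hUm := (mem_powersetCard.1 hU).2
    obtain ⟨S, hS, hUS⟩ := exists_mem_powersetCard_disjoint (S := U) (M := N) (m := m) (by lia)
    exact ⟨S, hS, U, hU, hUS.symm, hUT⟩

lemma exists_threadColorable_right {N : Finset α} (hMs : ∀ M ∈ Ms, 2 * m ≤ #M)
    (hN : 2 * m ≤ #N) (hS : #S = m) : ∃ T ∈ N.powersetCard m, ThreadColorable m Ms S T := by
  induction Ms generalizing S with
  | nil => exact exists_mem_powersetCard_disjoint (by lia)
  | cons M Ms ih =>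
    obtain ⟨hM, hMs⟩ := List.forall_mem_cons.1 hMs
    obtain ⟨U, hU, hSU⟩ := exists_mem_powersetCard_disjoint (S := S) (M := M) (m := m) (by lia)
    obtain ⟨T, hT, hUT⟩ := ih hMs (mem_powersetCard.1 hU).2
    exact ⟨T, hT, U, hU, hSU, hUT⟩

section ToleratesOverlap

variable [DecidableEq α]

lemma exists_mem_powersetCard_disjoint_card_inter_le {P Q X : Finset α} (hM : m + #X ≤ #M)
    (hPM : P ⊆ M) (hPQ : Disjoint P Q) (hP : m ≤ #(P \ X) + t) :
    ∃ U ∈ M.powersetCard m, Disjoint X U ∧ #(U ∩ Q) ≤ t := by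
  obtain ⟨K, hKP, hK⟩ := exists_subset_card_eq (show m - t ≤ #(P \ X) by lia)
  have hMX : m ≤ #(M \ X) := by
    have := le_card_sdiff X M
    lia
  obtain ⟨U, hKU, hUM, hU⟩ := exists_subsuperset_card_eq
    (hKP.trans (sdiff_subset_sdiff hPM le_rfl)) (by lia) hMX
  have hUQ : U ∩ Q ⊆ U \ K := fun c hc => by
    have hcQ := (mem_inter.1 hc).2
    exact mem_sdiff.2 ⟨(mem_inter.1 hc).1,
      fun hcK => disjoint_left.1 hPQ (mem_sdiff.1 (hKP hcK)).1 hcQ⟩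
  refine ⟨U, mem_powersetCard.2 ⟨hUM.trans sdiff_subset, hU⟩,
    disjoint_of_subset_right hUM disjoint_sdiff, ?_⟩
  calc #(U ∩ Q) ≤ #(U \ K) := card_le_card hUQ
    _ = m - (m - t) := by rw [card_sdiff_of_subset hKU, hU, hK]
    _ ≤ t := by lia

/-- Every `m`-set meeting `F` in at most `t` colours can be used at the start of a thread that ends
with the colours `T`; the upper bound follows how `F` and `t` evolve when the thread grows. -/
def ToleratesOverlap (m : ℕ) (Ms : List (Finset α)) (T F : Finset α) (t : ℕ) : Prop :=
  ∀ S : Finset α, #S = m → #(S ∩ F) ≤ t → ThreadColorable m Ms S T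

lemma ToleratesOverlap.cons (h : ToleratesOverlap m Ms T F t) (hM : 2 * m ≤ #M)
    (hF' : F' ⊆ M \ F) (ht : m + t' ≤ #F' + t) : ToleratesOverlap m (M :: Ms) T F' t' := by
  intro S hS hSF'
  have hF'S : m ≤ #(F' \ S) + t := by
    have := card_sdiff_add_card_inter F' S
    rw [inter_comm] at this
    lia
  obtain ⟨U, hU, hSU, hUF⟩ := exists_mem_powersetCard_disjoint_card_inter_le (by lia)
    (hF'.trans sdiff_subset) (disjoint_of_subset_left hF' sdiff_disjoint) hF'S
  exact ⟨U, hU, hSU, h U (mem_powersetCard.1 hU).2 hUF⟩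

lemma ToleratesOverlap.exists_cons (h : ToleratesOverlap m Ms T F t) (hF : #F = m)
    (hM : 2 * m + e ≤ #M) :
    ∃ F', #F' = m + e ∧ ToleratesOverlap m (M :: Ms) T F' (t + e) := by
  have hMF : m + e ≤ #(M \ F) := by
    have := le_card_sdiff F M
    lia
  obtain ⟨F', hF'M, hF'⟩ := exists_subset_card_eq hMF
  exact ⟨F', hF', h.cons (by lia) hF'M (by lia)⟩

lemma exists_toleratesOverlap (j : ℕ) (hMs : ∀ M ∈ Ms, 2 * m + e ≤ #M) (hj : Ms.length = 2 * j)
    (hT : #T = m) : ∃ F, #F = m ∧ ToleratesOverlap m Ms T F (j * e) := by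
  induction j generalizing Ms with
  | zero =>
    obtain rfl := List.length_eq_zero_iff.1 hj
    refine ⟨T, hT, fun S _ hST => ?_⟩
    rwa [zero_mul, Nat.le_zero, card_eq_zero, ← disjoint_iff_inter_eq_empty] at hST
  | succ j ih =>
    obtain ⟨M, N, Ms, rfl⟩ : ∃ M N Ms', Ms = M :: N :: Ms' := by
      match Ms, hj with
      | M :: N :: Ms', _ => exact ⟨M, N, Ms', rfl⟩
    simp only [List.forall_mem_cons] at hMs
    obtain ⟨F, hF, h⟩ := ih hMs.2.2 (by simp only [List.length_cons] at hj; lia)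
    obtain ⟨F', hF', h'⟩ := h.exists_cons hF hMs.2.1
    have hMF' : m ≤ #(M \ F') := by
      have := le_card_sdiff F' M
      lia
    obtain ⟨F₂, hF₂M, hF₂⟩ := exists_subset_card_eq hMF'
    exact ⟨F₂, hF₂, h'.cons (by lia) hF₂M (by rw [hF₂, Nat.succ_mul])⟩

end ToleratesOverlap

theorem threadColorable_of_two_mul_le (he : m ≤ q * e) (hMs : ∀ M ∈ Ms, 2 * m + e ≤ #M)
    (hq : 2 * q ≤ Ms.length + 1) (hS : #S = m) (hT : #T = m) : ThreadColorable m Ms S T := by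
  classical
  induction Ms generalizing S with
  | nil =>
    obtain rfl : q = 0 := by simp only [List.length_nil] at hq; lia
    obtain rfl : S = ∅ := by rw [← card_eq_zero]; lia
    exact disjoint_empty_left T
  | cons M Ms ih =>
    obtain ⟨hM, hMs⟩ := List.forall_mem_cons.1 hMs
    rcases le_or_gt (2 * q) (Ms.length + 1) with hlong | hshort
    · obtain ⟨U, hU, hSU⟩ := exists_mem_powersetCard_disjoint (S := S) (M := M) (m := m) (by lia)
      exact ⟨U, hU, hSU, ih hMs hlong (mem_powersetCard.1 hU).2⟩
    · obtain ⟨j, rfl⟩ : ∃ j, q = j + 1 := ⟨q - 1, by lia⟩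
      obtain ⟨F, hF, h⟩ := exists_toleratesOverlap j hMs
        (by simp only [List.length_cons] at hq; lia) hT
      obtain ⟨F', -, h'⟩ := h.exists_cons hF hM
      refine h' S hS ?_
      calc #(S ∩ F') ≤ #S := card_le_card inter_subset_left
        _ ≤ j * e + e := by rw [← Nat.succ_mul]; lia

section Obstruction

variable [DecidableEq α]

lemma card_inter_add_card_inter_le_of_disjoint {X Y : Finset α} (h : Disjoint X Y) (Z : Finset α) :
    #(X ∩ Z) + #(Y ∩ Z) ≤ #Z := by
  rw [← card_union_of_disjoint (h.mono inter_subset_left inter_subset_left)]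
  exact card_le_card (union_subset inter_subset_right inter_subset_right)

lemma card_le_card_inter_add_card_inter {X Y Z : Finset α} (h : X ⊆ Y ∪ Z) :
    #X ≤ #(X ∩ Y) + #(X ∩ Z) := by
  calc #X = #(X ∩ Y ∪ X ∩ Z) := by rw [← inter_union_distrib_left, inter_eq_left.2 h]
    _ ≤ #(X ∩ Y) + #(X ∩ Z) := card_union_le _ _

lemma card_inter_le_card_inter_add_of_disjoint {B X Y Z : Finset α} (hB : #B = m + e) (hS : #S = m)
    (hX : X ∈ (B ∪ S).powersetCard m) (hY : Y ∈ (B ∪ S).powersetCard m) (hXY : Disjoint X Y)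
    (hYZ : Disjoint Y Z) : #(Z ∩ B) ≤ #(X ∩ B) + e := by
  obtain ⟨hXBS, hX⟩ := mem_powersetCard.1 hX
  obtain ⟨hYBS, hY⟩ := mem_powersetCard.1 hY
  have := card_le_card_inter_add_card_inter hXBS
  have := card_le_card_inter_add_card_inter hYBS
  have := card_inter_add_card_inter_le_of_disjoint hXY S
  have := card_inter_add_card_inter_le_of_disjoint hYZ B
  lia

lemma le_card_inter_add_of_threadColorable {B X : Finset α} (hB : #B = m + e) (hS : #S = m)
    (hX : X ∈ (B ∪ S).powersetCard m) (j : ℕ)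
    (h : ThreadColorable m (List.replicate (2 * j) (B ∪ S) ++ [B ∪ S, B ∪ T]) X T) :
    m ≤ #(X ∩ B) + (j + 1) * e := by
  induction j generalizing X with
  | zero =>
    obtain ⟨Y, hY, hXY, Z, hZ, hYZ, hZT⟩ := h
    obtain ⟨hZBT, hZ⟩ := mem_powersetCard.1 hZ
    have hZB : Z ∩ B = Z := inter_eq_left.2 (hZT.left_le_of_le_sup_right hZBT)
    have := card_inter_le_card_inter_add_of_disjoint hB hS hX hY hXY hYZ
    rw [hZB] at this
    lia
  | succ j ih =>
    obtain ⟨Y, hY, hXY, Z, hZ, hYZ, hZT⟩ := h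
    have := card_inter_le_card_inter_add_of_disjoint hB hS hX hY hXY hYZ
    have := ih hZ hZT
    rw [Nat.succ_mul]
    lia

theorem not_threadColorable_replicate {B : Finset α} (hB : #B = m + e) (hS : #S = m)
    (hSB : Disjoint S B) (j : ℕ) (he : (j + 1) * e < m) :
    ¬ ThreadColorable m (List.replicate (2 * j) (B ∪ S) ++ [B ∪ S, B ∪ T]) S T := fun h => by
  have := le_card_inter_add_of_threadColorable hB hS
    (mem_powersetCard.2 ⟨subset_union_right, hS⟩) j h
  rw [disjoint_iff_inter_eq_empty.1 hSB, card_empty] at this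
  lia

end Obstruction

end Threads

section Gluing

variable {V W X α : Type*} {G : SimpleGraph V} {H : SimpleGraph W} {K : SimpleGraph X}

/-- `K` is the union of the copies `f` of `G` and `g` of `H`, which may overlap. Series and parallel
compositions are both of this form, so what they have in common is proved for gluings. -/
structure IsGluing (f : Copy G K) (g : Copy H K) : Prop where
  cover : ∀ w, (∃ v, f v = w) ∨ ∃ v, g v = w
  adj : ∀ ⦃u w⦄, K.Adj u w →
    (∃ a b, G.Adj a b ∧ f a = u ∧ f b = w) ∨ ∃ a b, H.Adj a b ∧ g a = u ∧ g b = w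

namespace IsGluing

variable {f : Copy G K} {g : Copy H K}

lemma symm (h : IsGluing f g) : IsGluing g f :=
  ⟨fun w => (h.cover w).symm, fun _ _ huw => (h.adj huw).symm⟩

lemma exists_comp_eq {Y : Type*} (h : IsGluing f g) (F : V → Y) (F' : W → Y)
    (hF : ∀ a b, f a = g b → F a = F' b) : ∃ φ : X → Y, φ ∘ f = F ∧ φ ∘ g = F' := by
  have hφ (w : X) : ∃ y, (∀ a, f a = w → F a = y) ∧ ∀ b, g b = w → F' b = y := by
    rcases h.cover w with ⟨v, rfl⟩ | ⟨v, rfl⟩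
    · exact ⟨F v, fun a ha => congrArg F (f.injective ha), fun b hb => (hF v b hb.symm).symm⟩
    · exact ⟨F' v, fun a ha => hF a v ha, fun b hb => congrArg F' (g.injective hb)⟩
  choose φ hφf hφg using hφ
  exact ⟨φ, funext fun a => (hφf _ a rfl).symm, funext fun b => (hφg _ b rfl).symm⟩

lemma isMultiColoring_iff (h : IsGluing f g) {L : X → Finset α} {m : ℕ} {φ : X → Finset α} :
    IsMultiColoring K L m φ ↔
      IsMultiColoring G (L ∘ f) m (φ ∘ f) ∧ IsMultiColoring H (L ∘ g) m (φ ∘ g) := by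
  refine ⟨fun hφ => ⟨⟨fun v => hφ.1 (f v), fun _ _ huw => hφ.2 (f.toHom.map_adj huw)⟩,
    ⟨fun v => hφ.1 (g v), fun _ _ huw => hφ.2 (g.toHom.map_adj huw)⟩⟩, fun ⟨hf, hg⟩ => ⟨?_, ?_⟩⟩
  · intro w
    rcases h.cover w with ⟨v, rfl⟩ | ⟨v, rfl⟩
    exacts [hf.1 v, hg.1 v]
  · intro u w huw
    rcases h.adj huw with ⟨a, b, hab, rfl, rfl⟩ | ⟨a, b, hab, rfl, rfl⟩
    exacts [hf.2 hab, hg.2 hab]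

end IsGluing

end Gluing

namespace TTGraph

variable {A B : TTGraph}

lemma pmap_x : A.pmap B B.x = Sum.inl A.x := dif_pos rfl

lemma pmap_y (hB : B.x ≠ B.y) : A.pmap B B.y = Sum.inl A.y :=
  (dif_neg hB.symm).trans (dif_pos rfl)

lemma pmap_of_ne {v : B.V} (hx : v ≠ B.x) (hy : v ≠ B.y) :
    A.pmap B v = Sum.inr ⟨v, hx, hy⟩ :=
  (dif_neg hx).trans (dif_neg hy)

lemma inl_eq_pmap_iff (hB : B.x ≠ B.y) {a : A.V} {b : B.V} :
    Sum.inl a = A.pmap B b ↔ a = A.x ∧ b = B.x ∨ a = A.y ∧ b = B.y := by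
  constructor
  · intro h
    by_cases hx : b = B.x
    · subst hx
      exact .inl ⟨Sum.inl_injective (h.trans pmap_x), rfl⟩
    by_cases hy : b = B.y
    · subst hy
      exact .inr ⟨Sum.inl_injective (h.trans (pmap_y hB)), rfl⟩
    · exact (Sum.inl_ne_inr (h.trans (pmap_of_ne hx hy))).elim
  · rintro (⟨rfl, rfl⟩ | ⟨rfl, rfl⟩)
    exacts [pmap_x.symm, (pmap_y hB).symm]

lemma pmap_injective (hA : A.x ≠ A.y) : Function.Injective (A.pmap B) := by
  classical
  refine Function.LeftInverse.injective
    (g := Sum.elim (fun a => if a = A.x then B.x else B.y) Subtype.val) fun v => ?_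
  by_cases hx : v = B.x
  · rw [hx, pmap_x]
    exact if_pos rfl
  by_cases hy : v = B.y
  · subst hy
    rw [pmap_y (Ne.symm hx)]
    exact if_neg hA.symm
  · rw [pmap_of_ne hx hy]
    rfl

lemma smap_x : A.smap B B.x = Sum.inl A.y := dif_pos rfl

lemma smap_of_ne {v : B.V} (hx : v ≠ B.x) : A.smap B v = Sum.inr ⟨v, hx⟩ := dif_neg hx

lemma inl_eq_smap_iff {a : A.V} {b : B.V} : Sum.inl a = A.smap B b ↔ a = A.y ∧ b = B.x := by
  constructor
  · intro h
    by_cases hx : b = B.x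
    · subst hx
      exact ⟨Sum.inl_injective (h.trans smap_x), rfl⟩
    · exact (Sum.inl_ne_inr (h.trans (smap_of_ne hx))).elim
  · rintro ⟨rfl, rfl⟩
    exact smap_x.symm

lemma smap_injective : Function.Injective (A.smap B) := by
  refine Function.LeftInverse.injective (g := Sum.elim (fun _ => B.x) Subtype.val) fun v => ?_
  by_cases hx : v = B.x
  · rw [hx, smap_x]
    rfl
  · rw [smap_of_ne hx]
    rfl

/-- The first part of a parallel composition. -/
def parallelInl (A B : TTGraph) : Copy A.G (A.parallel B).G where
  toHom := ⟨Sum.inl, fun {a b} hab => (fromRel_adj _ _ _).2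
    ⟨fun h => hab.ne (Sum.inl_injective h), .inl (.inl ⟨a, b, hab, rfl, rfl⟩)⟩⟩
  injective' := Sum.inl_injective

/-- The second part of a parallel composition; it embeds only if the terminals of the first part,
with which its own terminals are identified, are distinct. -/
noncomputable def parallelInr (A B : TTGraph) (hA : A.x ≠ A.y) : Copy B.G (A.parallel B).G where
  toHom := ⟨A.pmap B, fun {a b} hab => (fromRel_adj _ _ _).2
    ⟨fun h => hab.ne (pmap_injective hA h), .inl (.inr ⟨a, b, hab, rfl, rfl⟩)⟩⟩
  injective' := pmap_injective hA

/-- The first part of a series composition. -/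
def seriesInl (A B : TTGraph) : Copy A.G (A.series B).G where
  toHom := ⟨Sum.inl, fun {a b} hab => (fromRel_adj _ _ _).2
    ⟨fun h => hab.ne (Sum.inl_injective h), .inl (.inl ⟨a, b, hab, rfl, rfl⟩)⟩⟩
  injective' := Sum.inl_injective

/-- The second part of a series composition. -/
noncomputable def seriesInr (A B : TTGraph) : Copy B.G (A.series B).G where
  toHom := ⟨A.smap B, fun {a b} hab => (fromRel_adj _ _ _).2
    ⟨fun h => hab.ne (smap_injective h), .inl (.inr ⟨a, b, hab, rfl, rfl⟩)⟩⟩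
  injective' := smap_injective

lemma parallelInl_x : parallelInl A B A.x = (A.parallel B).x := rfl

lemma parallelInl_y : parallelInl A B A.y = (A.parallel B).y := rfl

lemma parallelInr_x (hA : A.x ≠ A.y) : parallelInr A B hA B.x = (A.parallel B).x := pmap_x

lemma parallelInr_y (hA : A.x ≠ A.y) (hB : B.x ≠ B.y) :
    parallelInr A B hA B.y = (A.parallel B).y := pmap_y hB

lemma seriesInl_x : seriesInl A B A.x = (A.series B).x := rfl

lemma seriesInr_y : seriesInr A B B.y = (A.series B).y := rfl

lemma seriesInr_x : seriesInr A B B.x = seriesInl A B A.y := smap_x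

lemma parallelInl_eq_parallelInr_iff (hA : A.x ≠ A.y) (hB : B.x ≠ B.y) {a : A.V} {b : B.V} :
    parallelInl A B a = parallelInr A B hA b ↔ a = A.x ∧ b = B.x ∨ a = A.y ∧ b = B.y :=
  inl_eq_pmap_iff hB

lemma seriesInl_eq_seriesInr_iff {a : A.V} {b : B.V} :
    seriesInl A B a = seriesInr A B b ↔ a = A.y ∧ b = B.x :=
  inl_eq_smap_iff

lemma isGluing_parallel (hA : A.x ≠ A.y) : IsGluing (parallelInl A B) (parallelInr A B hA) where
  cover
    | .inl a => .inl ⟨a, rfl⟩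
    | .inr b => .inr ⟨b.1, pmap_of_ne b.2.1 b.2.2⟩
  adj u w huw := by
    rcases ((fromRel_adj _ _ _).1 huw).2 with (⟨a, b, hab, rfl, rfl⟩ | ⟨a, b, hab, rfl, rfl⟩) |
      (⟨a, b, hab, rfl, rfl⟩ | ⟨a, b, hab, rfl, rfl⟩)
    exacts [.inl ⟨a, b, hab, rfl, rfl⟩, .inr ⟨a, b, hab, rfl, rfl⟩,
      .inl ⟨b, a, hab.symm, rfl, rfl⟩, .inr ⟨b, a, hab.symm, rfl, rfl⟩]

lemma isGluing_series : IsGluing (seriesInl A B) (seriesInr A B) where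
  cover
    | .inl a => .inl ⟨a, rfl⟩
    | .inr b => .inr ⟨b.1, smap_of_ne b.2⟩
  adj u w huw := by
    rcases ((fromRel_adj _ _ _).1 huw).2 with (⟨a, b, hab, rfl, rfl⟩ | ⟨a, b, hab, rfl, rfl⟩) |
      (⟨a, b, hab, rfl, rfl⟩ | ⟨a, b, hab, rfl, rfl⟩)
    exacts [.inl ⟨a, b, hab, rfl, rfl⟩, .inr ⟨a, b, hab, rfl, rfl⟩,
      .inl ⟨b, a, hab.symm, rfl, rfl⟩, .inr ⟨b, a, hab.symm, rfl, rfl⟩]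

lemma exists_comp_parallel_eq (hA : A.x ≠ A.y) (hB : B.x ≠ B.y) {Y : Type*} (F : A.V → Y)
    (F' : B.V → Y) (hx : F A.x = F' B.x) (hy : F A.y = F' B.y) :
    ∃ φ : (A.parallel B).V → Y, φ ∘ parallelInl A B = F ∧ φ ∘ parallelInr A B hA = F' :=
  (isGluing_parallel hA).exists_comp_eq F F' fun a b hab => by
    rcases (parallelInl_eq_parallelInr_iff hA hB).1 hab with ⟨rfl, rfl⟩ | ⟨rfl, rfl⟩
    exacts [hx, hy]

lemma exists_comp_series_eq {Y : Type*} (F : A.V → Y) (F' : B.V → Y) (h : F A.y = F' B.x) :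
    ∃ φ : (A.series B).V → Y, φ ∘ seriesInl A B = F ∧ φ ∘ seriesInr A B = F' :=
  isGluing_series.exists_comp_eq F F' fun a b hab => by
    obtain ⟨rfl, rfl⟩ := seriesInl_eq_seriesInr_iff.1 hab
    exact h

lemma Equiv.refl (A : TTGraph) : A.Equiv A := ⟨Iso.refl, rfl, rfl⟩

lemma Equiv.x_ne_y (h : A.Equiv B) (hB : B.x ≠ B.y) : A.x ≠ A.y := by
  obtain ⟨e, hx, hy⟩ := h
  rwa [← hx, ← hy, e.injective.ne_iff] at hB

end TTGraph

lemma IsSP.x_ne_y {A : TTGraph} (hA : IsSP A) : A.x ≠ A.y := by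
  induction hA with
  | k2 A h => exact h.x_ne_y Bool.false_ne_true
  | parallel A B C _ _ h ihA _ => exact h.x_ne_y fun hxy => ihA (Sum.inl_injective hxy)
  | series A B C _ _ h _ ihB =>
    exact h.x_ne_y fun hxy => ihB (TTGraph.inl_eq_smap_iff.1 hxy).2.symm

namespace TTGraph

open Finset

variable {A B : TTGraph} {α : Type*} {m : ℕ} {S T : Finset α}

/-- The colours `S` and `T` of the terminals extend to an `m`-fold colouring from the lists `L`. -/
def Extendable (A : TTGraph) (L : A.V → Finset α) (m : ℕ) (S T : Finset α) : Prop :=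
  ∃ φ, IsMultiColoring A.G L m φ ∧ φ A.x = S ∧ φ A.y = T

lemma Extendable.of_iso {L : A.V → Finset α} (e : A.G ≃g B.G) (hx : e A.x = B.x)
    (hy : e A.y = B.y) (h : B.Extendable (L ∘ e.symm) m S T) : A.Extendable L m S T := by
  obtain ⟨φ, hφ, hφx, hφy⟩ := h
  refine ⟨φ ∘ e, ⟨fun v => ?_, fun u w huw => hφ.disjoint (e.map_adj_iff.2 huw)⟩,
    (congrArg φ hx).trans hφx, (congrArg φ hy).trans hφy⟩
  simpa only [Function.comp_apply, e.symm_apply_apply] using hφ.mem_powersetCard (e v)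

lemma extendable_parallel_iff (hA : A.x ≠ A.y) (hB : B.x ≠ B.y)
    {L : (A.parallel B).V → Finset α} :
    (A.parallel B).Extendable L m S T ↔ A.Extendable (L ∘ parallelInl A B) m S T ∧
      B.Extendable (L ∘ parallelInr A B hA) m S T := by
  constructor
  · rintro ⟨φ, hφ, rfl, rfl⟩
    obtain ⟨hφA, hφB⟩ := (isGluing_parallel hA).isMultiColoring_iff.1 hφ
    exact ⟨⟨_, hφA, rfl, rfl⟩, ⟨_, hφB, congrArg φ (parallelInr_x hA),
      congrArg φ (parallelInr_y hA hB)⟩⟩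
  · rintro ⟨⟨φA, hφA, rfl, rfl⟩, ⟨φB, hφB, hx, hy⟩⟩
    obtain ⟨φ, rfl, rfl⟩ := exists_comp_parallel_eq hA hB φA φB hx.symm hy.symm
    exact ⟨φ, (isGluing_parallel hA).isMultiColoring_iff.2 ⟨hφA, hφB⟩, rfl, rfl⟩

lemma extendable_series_iff {L : (A.series B).V → Finset α} :
    (A.series B).Extendable L m S T ↔ ∃ U, A.Extendable (L ∘ seriesInl A B) m S U ∧
      B.Extendable (L ∘ seriesInr A B) m U T := by
  constructor
  · rintro ⟨φ, hφ, rfl, rfl⟩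
    obtain ⟨hφA, hφB⟩ := isGluing_series.isMultiColoring_iff.1 hφ
    exact ⟨_, ⟨_, hφA, rfl, rfl⟩, ⟨_, hφB, congrArg φ seriesInr_x, rfl⟩⟩
  · rintro ⟨_, ⟨φA, hφA, rfl, rfl⟩, ⟨φB, hφB, hx, rfl⟩⟩
    obtain ⟨φ, rfl, rfl⟩ := exists_comp_series_eq φA φB hx.symm
    exact ⟨φ, isGluing_series.isMultiColoring_iff.2 ⟨hφA, hφB⟩, rfl, rfl⟩

lemma extendable_K2TT_iff {L : Bool → Finset α} :
    K2TT.Extendable L m S T ↔ S ∈ (L false).powersetCard m ∧ T ∈ (L true).powersetCard m ∧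
      Disjoint S T := by
  constructor
  · rintro ⟨φ, hφ, rfl, rfl⟩
    exact ⟨hφ.mem_powersetCard false, hφ.mem_powersetCard true, hφ.disjoint Bool.false_ne_true⟩
  · rintro ⟨hS, hT, hST⟩
    refine ⟨fun v => bif v then T else S, ⟨Bool.forall_bool.2 ⟨hS, hT⟩, fun u w huw => ?_⟩,
      rfl, rfl⟩
    match u, w with
    | false, true => exact hST
    | true, false => exact hST.symm
    | false, false | true, true => exact (huw.ne rfl).elim

end TTGraph

lemma isPath_append {V : Type*} {G : SimpleGraph V} {u v w : V} {p : G.Walk u v} {q : G.Walk v w}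
    (hp : p.IsPath) (hq : q.IsPath) (h : ∀ z ∈ p.support, z ∈ q.support → z = v) :
    (p.append q).IsPath := by
  rw [Walk.isPath_def, Walk.support_append]
  have hq' := hq.support_nodup
  rw [← Walk.cons_tail_support, List.nodup_cons] at hq'
  refine hp.support_nodup.append hq'.2 fun z hzp hzq => ?_
  obtain rfl := h z hzp (List.mem_of_mem_tail hzq)
  exact hq'.1 hzq

lemma exists_isPath_copy {V W : Type*} {G : SimpleGraph V} {K : SimpleGraph W} {u v : V} {x y : W}
    {p : G.Walk u v} (hp : p.IsPath) (f : Copy G K) (hu : f u = x) (hv : f v = y) :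
    ∃ p' : K.Walk x y, p'.IsPath ∧ p'.length = p.length ∧
      ∀ i, p'.getVert i = f (p.getVert i) := by
  subst hu hv
  exact ⟨p.map f.toHom, hp.map f.injective, Walk.length_map _ _,
    fun i => Walk.getVert_map _ _ i⟩

namespace TTGraph

open Finset

variable {A B : TTGraph}

section Paths

variable {p : A.G.Walk A.x A.y} {q : B.G.Walk B.x B.y}

lemma exists_isPath_series (hp : p.IsPath) (hq : q.IsPath) :
    ∃ r : (A.series B).G.Walk (A.series B).x (A.series B).y,
      r.IsPath ∧ r.length = p.length + q.length := by
  obtain ⟨p', hp', hplen, hpvert⟩ := exists_isPath_copy hp (seriesInl A B) seriesInl_x rfl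
  obtain ⟨q', hq', hqlen, hqvert⟩ := exists_isPath_copy hq (seriesInr A B) seriesInr_x seriesInr_y
  refine ⟨p'.append q', isPath_append hp' hq' fun z hzp hzq => ?_,
    by rw [Walk.length_append, hplen, hqlen]⟩
  obtain ⟨i, rfl, -⟩ := Walk.mem_support_iff_exists_getVert.1 hzp
  obtain ⟨j, hij, -⟩ := Walk.mem_support_iff_exists_getVert.1 hzq
  rw [hpvert, hqvert] at hij
  rw [hpvert, (seriesInl_eq_seriesInr_iff.1 hij.symm).1]

lemma egirth_parallel_le_length_add_length (hA : A.x ≠ A.y) (hB : B.x ≠ B.y) (hp : p.IsPath)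
    (hq : q.IsPath) (hpq : p.length ≠ 1 ∨ q.length ≠ 1) :
    (A.parallel B).G.egirth ≤ p.length + q.length := by
  obtain ⟨p', hp', hplen, hpvert⟩ :=
    exists_isPath_copy hp (parallelInl A B) parallelInl_x parallelInl_y
  obtain ⟨q', hq', hqlen, hqvert⟩ :=
    exists_isPath_copy hq (parallelInr A B hA) (parallelInr_x hA) (parallelInr_y hA hB)
  have hne : p' ≠ q' := by
    rintro rfl
    have hvert : parallelInl A B (p.getVert 1) = parallelInr A B hA (q.getVert 1) :=
      (hpvert 1).symm.trans (hqvert 1)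
    have hpos : p.length ≠ 0 := fun h => hA (Walk.eq_of_length_eq_zero h)
    rcases (parallelInl_eq_parallelInr_iff hA hB).1 hvert with ⟨h, -⟩ | ⟨h, -⟩
    · rw [hp.getVert_eq_start_iff (by lia)] at h
      lia
    · rw [hp.getVert_eq_end_iff (by lia)] at h
      lia
  obtain ⟨w, -, -, c, hc, hclen⟩ := hp'.exists_isCycle_length_le_add_of_ne hq' hne
  rw [hplen, hqlen] at hclen
  exact (egirth_le_length hc).trans (by exact_mod_cast hclen)

end Paths

variable {α : Type*} {a e m q : ℕ}

/-- Any colours of the terminals extend. -/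
def IsFlexible (A : TTGraph) (L : A.V → Finset α) (m : ℕ) : Prop :=
  ∀ S ∈ (L A.x).powersetCard m, ∀ T ∈ (L A.y).powersetCard m, A.Extendable L m S T

/-- `A` restricts the colours of its terminals no more than a thread does that is as long as some
path between them, which has fewer than `2 * q` edges, and whose lists have size at least `a`. -/
def IsThreadLike (A : TTGraph) (L : A.V → Finset α) (m a q : ℕ) : Prop :=
  ∃ p : A.G.Walk A.x A.y, p.IsPath ∧ p.length < 2 * q ∧
    ∃ Ms : List (Finset α), Ms.length + 1 = p.length ∧ (∀ M ∈ Ms, a ≤ #M) ∧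
      ∀ S ∈ (L A.x).powersetCard m, ∀ T ∈ (L A.y).powersetCard m,
        ThreadColorable m Ms S T → A.Extendable L m S T

/-- Any colours of the first terminal can be continued to the second one. -/
def IsExtendableRight (A : TTGraph) (L : A.V → Finset α) (m : ℕ) : Prop :=
  ∀ S ∈ (L A.x).powersetCard m, ∃ T ∈ (L A.y).powersetCard m, A.Extendable L m S T

/-- Any colours of the second terminal can be continued to the first one. -/
def IsExtendableLeft (A : TTGraph) (L : A.V → Finset α) (m : ℕ) : Prop :=
  ∀ T ∈ (L A.y).powersetCard m, ∃ S ∈ (L A.x).powersetCard m, A.Extendable L m S T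

lemma isExtendableRight_of_isFlexible_or_isThreadLike {L : A.V → Finset α}
    (hL : 2 * m + e ≤ #(L A.y)) (h : A.IsFlexible L m ∨ A.IsThreadLike L m (2 * m + e) q) :
    A.IsExtendableRight L m := by
  intro S hS
  rcases h with h | ⟨-, -, -, Ms, -, hMs, h⟩
  · obtain ⟨T, hT⟩ := powersetCard_nonempty.2 (show m ≤ #(L A.y) by lia)
    exact ⟨T, hT, h S hS T hT⟩
  · obtain ⟨T, hT, hST⟩ := exists_threadColorable_right
      (fun M hM => le_of_add_le_left (hMs M hM)) (le_of_add_le_left hL) (mem_powersetCard.1 hS).2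
    exact ⟨T, hT, h S hS T hT hST⟩

lemma isExtendableLeft_of_isFlexible_or_isThreadLike {L : A.V → Finset α}
    (hL : 2 * m + e ≤ #(L A.x)) (h : A.IsFlexible L m ∨ A.IsThreadLike L m (2 * m + e) q) :
    A.IsExtendableLeft L m := by
  intro T hT
  rcases h with h | ⟨-, -, -, Ms, -, hMs, h⟩
  · obtain ⟨S, hS⟩ := powersetCard_nonempty.2 (show m ≤ #(L A.x) by lia)
    exact ⟨S, hS, h S hS T hT⟩
  · obtain ⟨S, hS, hST⟩ := exists_threadColorable_left
      (fun M hM => le_of_add_le_left (hMs M hM)) (le_of_add_le_left hL) (mem_powersetCard.1 hT).2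
    exact ⟨S, hS, h S hS T hT hST⟩

section Series

variable {L : (A.series B).V → Finset α}

lemma IsFlexible.series_left (hA : A.IsFlexible (L ∘ seriesInl A B) m)
    (hB : B.IsExtendableLeft (L ∘ seriesInr A B) m) : (A.series B).IsFlexible L m := by
  intro S hS T hT
  obtain ⟨U, hU, hUT⟩ := hB T hT
  rw [Function.comp_apply, seriesInr_x] at hU
  exact extendable_series_iff.2 ⟨U, hA S hS U hU, hUT⟩

lemma IsFlexible.series_right (hA : A.IsExtendableRight (L ∘ seriesInl A B) m)
    (hB : B.IsFlexible (L ∘ seriesInr A B) m) : (A.series B).IsFlexible L m := by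
  intro S hS T hT
  obtain ⟨U, hU, hSU⟩ := hA S hS
  rw [Function.comp_apply, ← seriesInr_x] at hU
  exact extendable_series_iff.2 ⟨U, hSU, hB U hU T hT⟩

lemma IsThreadLike.series (he : m ≤ q * e) (hL : 2 * m + e ≤ #(L (seriesInl A B A.y)))
    (hA : A.IsThreadLike (L ∘ seriesInl A B) m (2 * m + e) q)
    (hB : B.IsThreadLike (L ∘ seriesInr A B) m (2 * m + e) q) :
    (A.series B).IsFlexible L m ∨ (A.series B).IsThreadLike L m (2 * m + e) q := by
  obtain ⟨pA, hpA, -, Ms, hMslen, hMs, hA⟩ := hA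
  obtain ⟨pB, hpB, -, Ns, hNslen, hNs, hB⟩ := hB
  obtain ⟨r, hr, hrlen⟩ := exists_isPath_series hpA hpB
  have hlen : (Ms ++ L (seriesInl A B A.y) :: Ns).length + 1 = r.length := by
    rw [List.length_append, List.length_cons]
    lia
  have hlists : ∀ M ∈ Ms ++ L (seriesInl A B A.y) :: Ns, 2 * m + e ≤ #M :=
    List.forall_mem_append.2 ⟨hMs, List.forall_mem_cons.2 ⟨hL, hNs⟩⟩
  have hext : ∀ S ∈ (L (A.series B).x).powersetCard m, ∀ T ∈ (L (A.series B).y).powersetCard m,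
      ThreadColorable m (Ms ++ L (seriesInl A B A.y) :: Ns) S T →
        (A.series B).Extendable L m S T := by
    intro S hS T hT hST
    obtain ⟨U, hU, hSU, hUT⟩ := hST.exists_of_append_cons
    have hU' : U ∈ (L (seriesInr A B B.x)).powersetCard m := by rwa [seriesInr_x]
    exact extendable_series_iff.2 ⟨U, hA S hS U hU hSU, hB U hU' T hT hUT⟩
  rcases lt_or_ge r.length (2 * q) with hshort | hlong
  · exact .inr ⟨r, hr, hshort, _, hlen, hlists, hext⟩
  · exact .inl fun S hS T hT => hext S hS T hT <| threadColorable_of_two_mul_le he hlists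
      (hlen ▸ hlong) (mem_powersetCard.1 hS).2 (mem_powersetCard.1 hT).2

lemma isFlexible_or_isThreadLike_series (he : m ≤ q * e) (hL : ∀ v, 2 * m + e ≤ #(L v))
    (hLA : A.IsFlexible (L ∘ seriesInl A B) m ∨
      A.IsThreadLike (L ∘ seriesInl A B) m (2 * m + e) q)
    (hLB : B.IsFlexible (L ∘ seriesInr A B) m ∨
      B.IsThreadLike (L ∘ seriesInr A B) m (2 * m + e) q) :
    (A.series B).IsFlexible L m ∨ (A.series B).IsThreadLike L m (2 * m + e) q := by
  rcases hLA with hfA | htA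
  · exact .inl (hfA.series_left (isExtendableLeft_of_isFlexible_or_isThreadLike (hL _) hLB))
  rcases hLB with hfB | htB
  · exact .inl
      (.series_right (isExtendableRight_of_isFlexible_or_isThreadLike (hL _) (.inr htA)) hfB)
  · exact htA.series he (hL _) htB

end Series

section Parallel

variable {L : (A.parallel B).V → Finset α}

lemma mem_powersetCard_parallelInr_x (hA : A.x ≠ A.y) {S : Finset α} :
    S ∈ ((L ∘ parallelInr A B hA) B.x).powersetCard m ↔
      S ∈ (L (A.parallel B).x).powersetCard m := by
  rw [Function.comp_apply, parallelInr_x]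

lemma mem_powersetCard_parallelInr_y (hA : A.x ≠ A.y) (hB : B.x ≠ B.y) {S : Finset α} :
    S ∈ ((L ∘ parallelInr A B hA) B.y).powersetCard m ↔
      S ∈ (L (A.parallel B).y).powersetCard m := by
  rw [Function.comp_apply, parallelInr_y hA hB]

lemma IsFlexible.parallel (hA : A.x ≠ A.y) (hB : B.x ≠ B.y)
    (hfA : A.IsFlexible (L ∘ parallelInl A B) m) (hfB : B.IsFlexible (L ∘ parallelInr A B hA) m) :
    (A.parallel B).IsFlexible L m := fun S hS T hT =>
  (extendable_parallel_iff hA hB).2 ⟨hfA S hS T hT,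
    hfB S ((mem_powersetCard_parallelInr_x hA).2 hS) T
      ((mem_powersetCard_parallelInr_y hA hB).2 hT)⟩

lemma IsThreadLike.parallel_left (hA : A.x ≠ A.y) (hB : B.x ≠ B.y)
    (hfA : A.IsThreadLike (L ∘ parallelInl A B) m a q)
    (hfB : B.IsFlexible (L ∘ parallelInr A B hA) m) : (A.parallel B).IsThreadLike L m a q := by
  obtain ⟨p, hp, hpq, Ms, hlen, hMs, hext⟩ := hfA
  obtain ⟨p', hp', hplen, -⟩ := exists_isPath_copy hp (parallelInl A B) parallelInl_x parallelInl_y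
  refine ⟨p', hp', hplen ▸ hpq, Ms, hplen ▸ hlen, hMs, fun S hS T hT hST => ?_⟩
  exact (extendable_parallel_iff hA hB).2 ⟨hext S hS T hT hST,
    hfB S ((mem_powersetCard_parallelInr_x hA).2 hS) T
      ((mem_powersetCard_parallelInr_y hA hB).2 hT)⟩

lemma IsThreadLike.parallel_right (hA : A.x ≠ A.y) (hB : B.x ≠ B.y)
    (hfA : A.IsFlexible (L ∘ parallelInl A B) m)
    (hfB : B.IsThreadLike (L ∘ parallelInr A B hA) m a q) :
    (A.parallel B).IsThreadLike L m a q := by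
  obtain ⟨p, hp, hpq, Ms, hlen, hMs, hext⟩ := hfB
  obtain ⟨p', hp', hplen, -⟩ :=
    exists_isPath_copy hp (parallelInr A B hA) (parallelInr_x hA) (parallelInr_y hA hB)
  refine ⟨p', hp', hplen ▸ hpq, Ms, hplen ▸ hlen, hMs, fun S hS T hT hST => ?_⟩
  exact (extendable_parallel_iff hA hB).2 ⟨hfA S hS T hT,
    hext S ((mem_powersetCard_parallelInr_x hA).2 hS) T
      ((mem_powersetCard_parallelInr_y hA hB).2 hT) hST⟩

lemma IsThreadLike.parallel (hA : A.x ≠ A.y) (hB : B.x ≠ B.y) {k : ℕ} (hk : 4 * q ≤ k + 1)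
    (hg : (k : ℕ∞) ≤ (A.parallel B).G.egirth) (hfA : A.IsThreadLike (L ∘ parallelInl A B) m a q)
    (hfB : B.IsThreadLike (L ∘ parallelInr A B hA) m a q) :
    (A.parallel B).IsThreadLike L m a q := by
  obtain ⟨p, hp, hpq, Ms, hlen, hMs, hextA⟩ := hfA
  obtain ⟨p₂, hp₂, hp₂q, Ns, hlen₂, -, hextB⟩ := hfB
  have hone : p.length = 1 ∧ p₂.length = 1 := by
    by_contra h
    rw [not_and_or] at h
    have : k ≤ p.length + p₂.length := by
      exact_mod_cast hg.trans (egirth_parallel_le_length_add_length hA hB hp hp₂ h)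
    lia
  obtain rfl : Ms = [] := List.length_eq_zero_iff.1 (by lia)
  obtain rfl : Ns = [] := List.length_eq_zero_iff.1 (by lia)
  obtain ⟨p', hp', hplen, -⟩ := exists_isPath_copy hp (parallelInl A B) parallelInl_x parallelInl_y
  refine ⟨p', hp', hplen ▸ hpq, [], hplen ▸ hlen, hMs, fun S hS T hT hST => ?_⟩
  exact (extendable_parallel_iff hA hB).2 ⟨hextA S hS T hT hST,
    hextB S ((mem_powersetCard_parallelInr_x hA).2 hS) T
      ((mem_powersetCard_parallelInr_y hA hB).2 hT) hST⟩

lemma isFlexible_or_isThreadLike_parallel (hA : A.x ≠ A.y) (hB : B.x ≠ B.y) {k : ℕ}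
    (hk : 4 * q ≤ k + 1) (hg : (k : ℕ∞) ≤ (A.parallel B).G.egirth)
    (hLA : A.IsFlexible (L ∘ parallelInl A B) m ∨ A.IsThreadLike (L ∘ parallelInl A B) m a q)
    (hLB : B.IsFlexible (L ∘ parallelInr A B hA) m ∨
      B.IsThreadLike (L ∘ parallelInr A B hA) m a q) :
    (A.parallel B).IsFlexible L m ∨ (A.parallel B).IsThreadLike L m a q := by
  rcases hLA with hfA | htA <;> rcases hLB with hfB | htB
  exacts [.inl (hfA.parallel hA hB hfB), .inr (.parallel_right hA hB hfA htB),
    .inr (.parallel_left hA hB htA hfB), .inr (.parallel hA hB hk hg htA htB)]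

end Parallel

lemma isThreadLike_K2TT {L : Bool → Finset α} (hq : 0 < q) : K2TT.IsThreadLike L m a q := by
  have hadj : K2TT.G.Adj K2TT.x K2TT.y := Bool.false_ne_true
  exact ⟨hadj.toWalk, .of_adj hadj, by rw [Walk.length_cons, Walk.length_nil]; lia, [], rfl,
    List.forall_mem_nil _, fun _ hS _ hT hST => extendable_K2TT_iff.2 ⟨hS, hT, hST⟩⟩

section Iso

variable {L : A.V → Finset α}

lemma IsFlexible.of_iso (f : A.G ≃g B.G) (hx : f A.x = B.x) (hy : f A.y = B.y)
    (h : B.IsFlexible (L ∘ f.symm) m) : A.IsFlexible L m := by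
  intro S hS T hT
  rw [← f.symm_apply_apply A.x, hx] at hS
  rw [← f.symm_apply_apply A.y, hy] at hT
  exact (h S hS T hT).of_iso f hx hy

lemma IsThreadLike.of_iso (f : A.G ≃g B.G) (hx : f A.x = B.x) (hy : f A.y = B.y)
    (h : B.IsThreadLike (L ∘ f.symm) m a q) : A.IsThreadLike L m a q := by
  obtain ⟨p, hp, hpq, Ms, hlen, hMs, hext⟩ := h
  obtain ⟨p', hp', hplen, -⟩ := exists_isPath_copy hp f.symm.toCopy
    (show f.symm B.x = A.x from f.symm_apply_eq.2 hx.symm)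
    (show f.symm B.y = A.y from f.symm_apply_eq.2 hy.symm)
  refine ⟨p', hp', hplen ▸ hpq, Ms, hplen ▸ hlen, hMs, fun S hS T hT hST => ?_⟩
  rw [← f.symm_apply_apply A.x, hx] at hS
  rw [← f.symm_apply_apply A.y, hy] at hT
  exact (hext S hS T hT hST).of_iso f hx hy

end Iso

end TTGraph

section UpperBound

open Finset TTGraph

namespace IsSP

variable {A : TTGraph} {α : Type*} {e k m q : ℕ}

theorem isFlexible_or_isThreadLike (hq : 0 < q) (he : m ≤ q * e) (hk : 4 * q ≤ k + 1)
    (hA : IsSP A) (hg : (k : ℕ∞) ≤ A.G.egirth) (L : A.V → Finset α)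
    (hL : ∀ v, 2 * m + e ≤ #(L v)) :
    A.IsFlexible L m ∨ A.IsThreadLike L m (2 * m + e) q := by
  induction hA with
  | k2 A h =>
    obtain ⟨f, hx, hy⟩ := h
    exact .inr (.of_iso f hx hy (isThreadLike_K2TT hq))
  | parallel A B C hA hB h ihA ihB =>
    obtain ⟨f, hx, hy⟩ := h
    rw [f.egirth_eq] at hg
    have hgA := hg.trans (IsContained.egirth_le ⟨parallelInl A B⟩)
    have hgB := hg.trans (IsContained.egirth_le ⟨parallelInr A B hA.x_ne_y⟩)
    have hAB := isFlexible_or_isThreadLike_parallel (L := L ∘ f.symm) hA.x_ne_y hB.x_ne_y hk hg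
      (ihA hgA _ fun _ => hL _) (ihB hgB _ fun _ => hL _)
    exact hAB.imp (.of_iso f hx hy) (.of_iso f hx hy)
  | series A B C _ _ h ihA ihB =>
    obtain ⟨f, hx, hy⟩ := h
    rw [f.egirth_eq] at hg
    have hgA := hg.trans (IsContained.egirth_le ⟨seriesInl A B⟩)
    have hgB := hg.trans (IsContained.egirth_le ⟨seriesInr A B⟩)
    have hAB := isFlexible_or_isThreadLike_series (L := L ∘ f.symm) he (fun _ => hL _)
      (ihA hgA _ fun _ => hL _) (ihB hgB _ fun _ => hL _)
    exact hAB.imp (.of_iso f hx hy) (.of_iso f hx hy)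

theorem exists_isMultiColoring (hq : 0 < q) (he : m ≤ q * e) (hk : 4 * q ≤ k + 1)
    (hA : IsSP A) (hg : (k : ℕ∞) ≤ A.G.egirth) (L : A.V → Finset α)
    (hL : ∀ v, 2 * m + e ≤ #(L v)) : ∃ φ, IsMultiColoring A.G L m φ := by
  obtain ⟨S, hS⟩ := powersetCard_nonempty.2 (show m ≤ #(L A.x) by have := hL A.x; lia)
  have hext : A.IsExtendableRight L m :=
    isExtendableRight_of_isFlexible_or_isThreadLike (hL A.y)
      (hA.isFlexible_or_isThreadLike hq he hk hg L hL)
  obtain ⟨T, -, φ, hφ, -⟩ := hext S hS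
  exact ⟨φ, hφ⟩

end IsSP

lemma choosable_iff {V : Type} {G : SimpleGraph V} {a m : ℕ} :
    Choosable G a m ↔
      ∀ L : V → Finset ℕ, (∀ v, #(L v) = a) → ∃ φ, IsMultiColoring G L m φ := by
  refine forall₂_congr fun L _ => exists_congr fun φ =>
    ⟨fun ⟨hsub, hcard, hdisj⟩ => ?_, fun h => ?_⟩
  · exact ⟨fun v => mem_powersetCard.2 ⟨hsub v, hcard v⟩, hdisj⟩
  · exact ⟨fun v => (mem_powersetCard.1 (h.mem_powersetCard v)).1,
      fun v => (mem_powersetCard.1 (h.mem_powersetCard v)).2, h.disjoint⟩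

lemma Choosable.mono {V : Type} {G : SimpleGraph V} {a b m : ℕ} (h : Choosable G a m)
    (hab : a ≤ b) : Choosable G b m := by
  intro L hL
  choose L' hL' hcard using fun v => exists_subset_card_eq (hab.trans_eq (hL v).symm)
  obtain ⟨φ, hsub, hφ⟩ := h L' hcard
  exact ⟨φ, fun v => (hsub v).trans (hL' v), hφ⟩

theorem IsSP.choosable {A : TTGraph} {e k m q : ℕ} (hq : 0 < q) (he : m ≤ q * e)
    (hk : 4 * q ≤ k + 1) (hA : IsSP A) (hg : (k : ℕ∞) ≤ A.G.egirth) :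
    Choosable A.G (2 * m + e) m :=
  choosable_iff.2 fun L hL => hA.exists_isMultiColoring hq he hk hg L fun v => (hL v).ge

end UpperBound

section Potentials

variable {V W X : Type*} {G : SimpleGraph V} {H : SimpleGraph W} {K : SimpleGraph X}

/-- An integer function on the vertices that varies by at most one along each edge. -/
def IsPotential (G : SimpleGraph V) (f : V → ℤ) : Prop := ∀ ⦃u v⦄, G.Adj u v → |f u - f v| ≤ 1

namespace IsPotential

variable {f : V → ℤ}

lemma const_sub (hf : IsPotential G f) (c : ℤ) : IsPotential G fun v => c - f v := fun u v huv => by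
  rw [sub_sub_sub_cancel_left, abs_sub_comm]
  exact hf huv

lemma add_const (hf : IsPotential G f) (c : ℤ) : IsPotential G fun v => f v + c := fun u v huv => by
  rw [add_sub_add_right_eq_sub]
  exact hf huv

lemma abs_sub_le_length (hf : IsPotential G f) {u v : V} (p : G.Walk u v) :
    |f u - f v| ≤ p.length := by
  induction p with
  | nil => simp only [sub_self, abs_zero, Walk.length_nil, Nat.cast_zero, le_refl]
  | @cons u w v huw p ih =>
    calc |f u - f v| ≤ |f u - f w| + |f w - f v| := abs_sub_le _ _ _
      _ ≤ 1 + p.length := add_le_add (hf huw) ih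
      _ = (Walk.cons huw p).length := by rw [Walk.length_cons, Nat.cast_succ, add_comm]

end IsPotential

lemma le_egirth_of_isPotential_deleteEdges {n : ℕ}
    (h : ∀ u v, G.Adj u v → ∃ f, IsPotential (G.deleteEdges {s(u, v)}) f ∧ n ≤ |f u - f v| + 1) :
    (n : ℕ∞) ≤ G.egirth := by
  refine le_egirth.2 fun u c hc => ?_
  cases c with
  | nil => exact (hc.not_nil .nil).elim
  | @cons _ v _ huv p =>
    obtain ⟨f, hf, hn⟩ := h u v huv
    have hp := (Walk.cons_isCycle_iff p huv).1 hc
    have hlen := hf.abs_sub_le_length (p.toDeleteEdge _ hp.2)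
    rw [Walk.toDeleteEdge, Walk.toDeleteEdges, Walk.length_transfer, abs_sub_comm] at hlen
    rw [Walk.length_cons]
    exact_mod_cast hn.trans (add_le_add_left hlen 1)

namespace IsGluing

variable {f : Copy G K} {g : Copy H K} {φ : X → ℤ}

lemma isPotential (h : IsGluing f g) (hf : IsPotential G (φ ∘ f)) (hg : IsPotential H (φ ∘ g)) :
    IsPotential K φ := fun u w huw => by
  rcases h.adj huw with ⟨a, b, hab, rfl, rfl⟩ | ⟨a, b, hab, rfl, rfl⟩
  exacts [hf hab, hg hab]

lemma isPotential_deleteEdges (h : IsGluing f g) {u v : V}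
    (hf : IsPotential (G.deleteEdges {s(u, v)}) (φ ∘ f)) (hg : IsPotential H (φ ∘ g)) :
    IsPotential (K.deleteEdges {s(f u, f v)}) φ := fun x y hxy => by
  obtain ⟨hxy, hne⟩ := deleteEdges_adj.1 hxy
  rcases h.adj hxy with ⟨a, b, hab, rfl, rfl⟩ | ⟨a, b, hab, rfl, rfl⟩
  · refine hf (deleteEdges_adj.2 ⟨hab, fun hs => hne ?_⟩)
    exact congrArg (Sym2.map f) (Set.mem_singleton_iff.1 hs)
  · exact hg hab

end IsGluing

end Potentials

namespace TTGraph

variable {A B : TTGraph}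

/-- Certificates for the girth of the graphs of the lower bound: the distance of the terminals is at
least `n`, and after the removal of any edge there is a potential that takes the values `0` and `d`
on the terminals and makes every detour around that edge have length at least `d + n - 1`. -/
structure HasPotentials (A : TTGraph) (n : ℕ) (d : ℤ) : Prop where
  terminals : ∃ f : A.V → ℤ, f A.x = 0 ∧ f A.y = n ∧ IsPotential A.G f
  edge : ∀ u v, A.G.Adj u v → ∃ f : A.V → ℤ, f A.x = 0 ∧ f A.y = d ∧
    IsPotential (A.G.deleteEdges {s(u, v)}) f ∧ d + n ≤ |f u - f v| + 1

namespace HasPotentials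

variable {n n' : ℕ} {d : ℤ}

lemma le_egirth (h : A.HasPotentials n n) : ((2 * n : ℕ) : ℕ∞) ≤ A.G.egirth := by
  refine le_egirth_of_isPotential_deleteEdges fun u v huv => ?_
  obtain ⟨f, -, -, hf, hn⟩ := h.edge u v huv
  exact ⟨f, hf, by push_cast; linarith⟩

lemma k2tt (d : ℤ) : K2TT.HasPotentials 1 d where
  terminals := ⟨fun v => bif v then 1 else 0, rfl, rfl,
    fun u v _ => by cases u <;> cases v <;> decide⟩
  edge u v huv := by
    refine ⟨fun v => bif v then d else 0, rfl, rfl, fun a b hab => ?_, ?_⟩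
    · have edge_unique : ∀ a b : Bool, a ≠ b → ∀ u v, u ≠ v → s(a, b) = s(u, v) := by decide
      obtain ⟨hab, hne⟩ := deleteEdges_adj.1 hab
      exact (hne (edge_unique a b hab.ne u v huv.ne)).elim
    · match u, v with
      | false, true => simpa [abs_sub_comm] using le_abs_self d
      | true, false => simpa using le_abs_self d
      | false, false | true, true => exact (huv.ne rfl).elim

lemma exists_isPotential_series {f : A.V → ℤ} {g : B.V → ℤ} (hf : IsPotential A.G f)
    (hfx : f A.x = 0) (hfy : f A.y = n) (hg : IsPotential B.G g) (hgx : g B.x = 0)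
    (hgy : g B.y = n') :
    ∃ φ : (A.series B).V → ℤ, φ (A.series B).x = 0 ∧ φ (A.series B).y = ↑(n + n') ∧
      IsPotential (A.series B).G φ := by
  obtain ⟨φ, hφA, hφB⟩ := exists_comp_series_eq f (fun v => g v + n) (by rw [hfy, hgx, zero_add])
  refine ⟨φ, (congrFun hφA A.x).trans hfx, (congrFun hφB B.y).trans ?_,
    isGluing_series.isPotential (hφA ▸ hf) (hφB ▸ hg.add_const n)⟩
  rw [hgy, Nat.cast_add, add_comm]

lemma series (hA : A.HasPotentials n (d + n')) (hB : B.HasPotentials n' (d + n)) :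
    (A.series B).HasPotentials (n + n') d := by
  obtain ⟨gA, hgAx, hgAy, hgA⟩ := hA.terminals
  obtain ⟨gB, hgBx, hgBy, hgB⟩ := hB.terminals
  refine ⟨exists_isPotential_series hgA hgAx hgAy hgB hgBx hgBy, fun u w huw => ?_⟩
  rcases isGluing_series.adj huw with ⟨a, b, hab, rfl, rfl⟩ | ⟨a, b, hab, rfl, rfl⟩
  · obtain ⟨fA, hfAx, hfAy, hfA, hle⟩ := hA.edge a b hab
    obtain ⟨φ, rfl, hφB⟩ :=
      exists_comp_series_eq fA (fun v => d + n' - gB v) (by rw [hfAy, hgBx, sub_zero])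
    refine ⟨φ, hfAx, (congrFun hφB B.y).trans ?_,
      isGluing_series.isPotential_deleteEdges hfA (hφB ▸ hgB.const_sub _), ?_⟩
    · rw [hgBy, add_sub_cancel_right]
    · simp only [Function.comp_apply] at hle
      push_cast
      linarith
  · obtain ⟨fB, hfBx, hfBy, hfB, hle⟩ := hB.edge a b hab
    obtain ⟨φ, hφA, hφB⟩ := exists_comp_series_eq (fun v => 0 - gA v) (fun v => fB v + -n)
      (by rw [hgAy, hfBx, zero_sub, zero_add])
    refine ⟨φ, (congrFun hφA A.x).trans ?_, (congrFun hφB B.y).trans ?_,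
      isGluing_series.symm.isPotential_deleteEdges (hφB ▸ hfB.add_const _)
        (hφA ▸ hgA.const_sub 0), ?_⟩
    · rw [hgAx, sub_zero]
    · rw [hfBy, add_neg_cancel_right]
    · have : φ (seriesInr A B a) - φ (seriesInr A B b) = fB a - fB b := by
        rw [← add_sub_add_right_eq_sub (fB a) (fB b) (-n : ℤ)]
        exact congrArg₂ (· - ·) (congrFun hφB a) (congrFun hφB b)
      rw [this]
      push_cast
      linarith

lemma parallel (hA' : A.x ≠ A.y) (hB' : B.x ≠ B.y) (hA : A.HasPotentials n n)
    (hB : B.HasPotentials n n) : (A.parallel B).HasPotentials n n := by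
  have hAB := isGluing_parallel (B := B) hA'
  obtain ⟨gA, hgAx, hgAy, hgA⟩ := hA.terminals
  obtain ⟨gB, hgBx, hgBy, hgB⟩ := hB.terminals
  refine ⟨?_, fun u w huw => ?_⟩
  · obtain ⟨φ, rfl, rfl⟩ :=
      exists_comp_parallel_eq hA' hB' gA gB (hgAx.trans hgBx.symm) (hgAy.trans hgBy.symm)
    exact ⟨φ, hgAx, hgAy, hAB.isPotential hgA hgB⟩
  · rcases hAB.adj huw with ⟨a, b, hab, rfl, rfl⟩ | ⟨a, b, hab, rfl, rfl⟩
    · obtain ⟨fA, hfAx, hfAy, hfA, hle⟩ := hA.edge a b hab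
      obtain ⟨φ, rfl, rfl⟩ :=
        exists_comp_parallel_eq hA' hB' fA gB (hfAx.trans hgBx.symm) (hfAy.trans hgBy.symm)
      exact ⟨φ, hfAx, hfAy, hAB.isPotential_deleteEdges hfA hgB, hle⟩
    · obtain ⟨fB, hfBx, hfBy, hfB, hle⟩ := hB.edge a b hab
      obtain ⟨φ, rfl, rfl⟩ :=
        exists_comp_parallel_eq hA' hB' gA fB (hgAx.trans hfBx.symm) (hgAy.trans hfBy.symm)
      exact ⟨φ, hgAx, hgAy, hAB.symm.isPotential_deleteEdges hfB hgA, hle⟩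

end HasPotentials

end TTGraph

namespace TTGraph

open Finset

/-- The path with `n + 1` edges whose end vertices are the terminals. -/
noncomputable def chain : ℕ → TTGraph
  | 0 => K2TT
  | n + 1 => K2TT.series (chain n)

lemma isSP_K2TT : IsSP K2TT := .k2 _ (.refl _)

lemma isSP_chain (n : ℕ) : IsSP (chain n) := by
  induction n with
  | zero => exact isSP_K2TT
  | succ n ih => exact .series _ _ _ isSP_K2TT ih (.refl _)

lemma hasPotentials_chain (n : ℕ) (d : ℤ) : (chain n).HasPotentials (n + 1) d := by
  induction n generalizing d with
  | zero => exact .k2tt d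
  | succ n ih =>
    rw [Nat.add_comm (n + 1) 1]
    exact (HasPotentials.k2tt _).series (ih _)

variable {A B : TTGraph} {α : Type*} {a e m n : ℕ} {D M N S T : Finset α}

lemma exists_lists_chain {Ms : List (Finset α)} (hn : Ms.length = n) (hMs : ∀ M ∈ Ms, #M = a)
    (hM : #M = a) (hN : #N = a) :
    ∃ L : (chain n).V → Finset α, (∀ v, #(L v) = a) ∧ L (chain n).x = M ∧ L (chain n).y = N ∧
      ∀ S T, (chain n).Extendable L m S T → ThreadColorable m Ms S T := by
  subst hn
  induction Ms generalizing M with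
  | nil =>
    exact ⟨fun v => bif v then N else M, Bool.forall_bool.2 ⟨hM, hN⟩, rfl, rfl,
      fun S T hST => (extendable_K2TT_iff.1 hST).2.2⟩
  | cons M' Ms ih =>
    obtain ⟨hM', hMs⟩ := List.forall_mem_cons.1 hMs
    obtain ⟨L', hL', hx, hy, hext⟩ := ih hMs hM'
    obtain ⟨L, hLK, rfl⟩ :=
      exists_comp_series_eq (A := K2TT) (fun v => bif v then M' else M) L' hx.symm
    have hK : ∀ v, #(bif v then M' else M) = a := Bool.forall_bool.2 ⟨hM, hM'⟩
    refine ⟨L, fun w => ?_, congrFun hLK false, hy, fun S T hST => ?_⟩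
    · rcases isGluing_series.cover w with ⟨v, rfl⟩ | ⟨v, rfl⟩
      · exact (congrArg card (congrFun hLK v)).trans (hK v)
      · exact hL' v
    · obtain ⟨U, hSU, hUT⟩ := extendable_series_iff.1 hST
      rw [hLK] at hSU
      obtain ⟨-, hU, hSU⟩ := extendable_K2TT_iff.1 hSU
      exact ⟨U, hU, hSU, hext U T hUT⟩

/-- Some lists of size `a`, equal to `D` at both terminals, admit no colouring that uses one of the
pairs in `P` at the terminals. Such obstructions accumulate under parallel composition. -/
def BlocksPairs (A : TTGraph) (m a : ℕ) (D : Finset α) (P : Set (Finset α × Finset α)) : Prop :=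
  ∃ L : A.V → Finset α, (∀ v, #(L v) = a) ∧ L A.x = D ∧ L A.y = D ∧
    ∀ p ∈ P, ¬ A.Extendable L m p.1 p.2

lemma BlocksPairs.parallel {P Q : Set (Finset α × Finset α)} (hA : A.x ≠ A.y) (hB : B.x ≠ B.y)
    (hP : A.BlocksPairs m a D P) (hQ : B.BlocksPairs m a D Q) :
    (A.parallel B).BlocksPairs m a D (P ∪ Q) := by
  obtain ⟨LA, hLA, hLAx, hLAy, hP⟩ := hP
  obtain ⟨LB, hLB, hLBx, hLBy, hQ⟩ := hQ
  obtain ⟨L, rfl, rfl⟩ :=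
    exists_comp_parallel_eq hA hB LA LB (hLAx.trans hLBx.symm) (hLAy.trans hLBy.symm)
  refine ⟨L, fun w => ?_, hLAx, hLAy, fun p hp hext => ?_⟩
  · rcases (isGluing_parallel hA).cover w with ⟨v, rfl⟩ | ⟨v, rfl⟩
    exacts [hLA v, hLB v]
  · obtain ⟨hextA, hextB⟩ := (extendable_parallel_iff hA hB).1 hext
    exact hp.elim (hP p · hextA) (hQ p · hextB)

lemma blocksPairs_chain {E : Finset α} {j : ℕ} (he : (j + 1) * e < m)
    (hD : #D = 2 * m + e) (hE : #E = m + e) (hDE : Disjoint D E) (hS : S ∈ D.powersetCard m)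
    (hT : T ∈ D.powersetCard m) :
    (chain (2 * j + 2)).BlocksPairs m (2 * m + e) D {(S, T)} := by
  classical
  rw [mem_powersetCard] at hS hT
  have hcard : ∀ R ⊆ D, #R = m → #(E ∪ R) = 2 * m + e := fun R hR hRm => by
    rw [card_union_of_disjoint (disjoint_of_subset_left hR hDE).symm, hE, hRm]
    lia
  have hMs : ∀ M ∈ List.replicate (2 * j) (E ∪ S) ++ [E ∪ S, E ∪ T], #M = 2 * m + e := by
    simp only [List.mem_append, List.mem_replicate, List.mem_cons, List.not_mem_nil, or_false]
    rintro M (⟨-, rfl⟩ | rfl | rfl)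
    exacts [hcard S hS.1 hS.2, hcard S hS.1 hS.2, hcard T hT.1 hT.2]
  obtain ⟨L, hL, hx, hy, hext⟩ := exists_lists_chain (m := m) (n := 2 * j + 2)
    (by rw [List.length_append, List.length_replicate]; rfl) hMs hD hD
  refine ⟨L, hL, hx, hy, fun p hp hST => ?_⟩
  rw [Set.mem_singleton_iff.1 hp] at hST
  exact not_threadColorable_replicate hE hS.2 (disjoint_of_subset_left hS.1 hDE) j he
    (hext S T hST)

lemma exists_isSP_blocksPairs {P : Finset (Finset α × Finset α)} (hP : P.Nonempty)
    (h : ∀ p ∈ P, (chain n).BlocksPairs m a D {p}) :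
    ∃ A, IsSP A ∧ A.HasPotentials (n + 1) ↑(n + 1) ∧ A.BlocksPairs m a D P := by
  induction hP using Finset.Nonempty.cons_induction with
  | singleton p =>
    rw [coe_singleton]
    exact ⟨chain n, isSP_chain n, hasPotentials_chain n _, h p (mem_singleton_self p)⟩
  | cons p P _ _ ih =>
    obtain ⟨hp, hP⟩ := (forall_mem_cons _ _).1 h
    obtain ⟨A, hA, hApot, hAP⟩ := ih hP
    have hn := (isSP_chain n).x_ne_y
    rw [coe_cons, Set.insert_eq]
    exact ⟨(chain n).parallel A, .parallel _ _ _ (isSP_chain n) hA (.refl _),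
      (hasPotentials_chain n _).parallel hn hA.x_ne_y hApot, hp.parallel hn hA.x_ne_y hAP⟩

theorem exists_not_choosable {q : ℕ} (hq : 0 < q) (he : q * e < m) :
    ∃ A, IsSP A ∧ ((4 * q + 2 : ℕ) : ℕ∞) ≤ A.G.egirth ∧ ¬ Choosable A.G (2 * m + e) m := by
  obtain ⟨j, rfl⟩ := Nat.exists_eq_add_of_le' hq
  let D := range (2 * m + e)
  let E := Ico (2 * m + e) (2 * m + e + (m + e))
  have hDE : Disjoint D E := disjoint_left.2 fun c hD hE =>
    (mem_range.1 hD).not_ge (mem_Ico.1 hE).1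
  have hE : #E = m + e := by rw [Nat.card_Ico, Nat.add_sub_cancel_left]
  have hm : (D.powersetCard m).Nonempty := powersetCard_nonempty.2 (by rw [card_range]; lia)
  obtain ⟨A, hA, hpot, L, hL, hx, hy, hblock⟩ := exists_isSP_blocksPairs (hm.product hm)
    fun p hp => blocksPairs_chain he (card_range _) hE hDE (mem_product.1 hp).1 (mem_product.1 hp).2
  refine ⟨A, hA, le_of_eq_of_le (congrArg _ (by ring)) hpot.le_egirth, fun hc => ?_⟩
  obtain ⟨φ, hφ⟩ := choosable_iff.1 hc L hL
  have hφx := hφ.mem_powersetCard A.x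
  have hφy := hφ.mem_powersetCard A.y
  rw [hx] at hφx
  rw [hy] at hφy
  exact hblock (φ A.x, φ A.y) (mem_coe.2 (mem_product.2 ⟨hφx, hφy⟩)) ⟨φ, hφ, rfl, rfl⟩

end TTGraph

lemma exists_ceil_eq_two_mul_add {q : ℕ} (hq : 0 < q) (m : ℕ) :
    ∃ e, ⌈((2 : ℝ) + 1 / q) * m⌉₊ = 2 * m + e ∧ m ≤ q * e := by
  have hq' : (0 : ℝ) < q := by exact_mod_cast hq
  refine ⟨⌈(m : ℝ) / q⌉₊, ?_, ?_⟩
  · rw [show ((2 : ℝ) + 1 / q) * m = m / q + (2 * m : ℕ) by push_cast; ring,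
      Nat.ceil_add_natCast (by positivity), add_comm]
  · have := (div_le_iff₀' hq').1 (Nat.le_ceil ((m : ℝ) / q))
    exact_mod_cast this

lemma exists_ceil_mul_le_two_mul_add {q : ℕ} (hq : 0 < q) {r : ℝ} (hr : r < 2 + 1 / q) :
    ∃ n : ℕ, ⌈r * ↑(q * n + 1)⌉₊ ≤ 2 * (q * n + 1) + n := by
  have hq' : (1 : ℝ) ≤ q := by exact_mod_cast hq
  obtain ⟨n, hn⟩ := exists_nat_ge (1 / (2 + 1 / q - r))
  have hδ : 0 < 2 + 1 / q - r := sub_pos.2 hr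
  refine ⟨n, Nat.ceil_le.2 ?_⟩
  have hgap : 1 / (q : ℝ) ≤ (2 + 1 / q - r) * (q * n + 1) :=
    calc 1 / (q : ℝ) ≤ 1 := div_le_one_of_le₀ hq' (by positivity)
      _ ≤ (2 + 1 / q - r) * n := (div_le_iff₀' hδ).1 hn
      _ ≤ (2 + 1 / q - r) * (q * n + 1) := by
        gcongr
        nlinarith [Nat.cast_nonneg (α := ℝ) n]
  push_cast
  calc r * (q * n + 1) = 2 * (q * n + 1) + n + 1 / q - (2 + 1 / q - r) * (q * n + 1) := by
        field_simp
        ring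
    _ ≤ 2 * (q * n + 1) + n := by linarith

/-- Theorem 1: for `k ∈ {4q-1, 4q, 4q+1, 4q+2}`, the strong fractional choice
number of the class of series-parallel graphs of girth at least `k` is exactly
`2 + 1/q`: (a) every such graph is `(⌈(2+1/q)m⌉, m)`-choosable for every `m`;
(b) for every `r < 2 + 1/q` some graph in the class fails to be
`(⌈rm⌉, m)`-choosable for some `m`. -/
theorem stmt_8 (q k : ℕ) (hq : 0 < q)
    (hk : k ∈ ({4 * q - 1, 4 * q, 4 * q + 1, 4 * q + 2} : Set ℕ)) :
    (∀ m : ℕ, 0 < m → ∀ A : TTGraph, IsSP A → (k : ℕ∞) ≤ A.G.egirth →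
      Choosable A.G ⌈((2 : ℝ) + 1 / q) * m⌉₊ m) ∧
    (∀ r : ℝ, r < 2 + 1 / q → ∃ m : ℕ, 0 < m ∧
      ∃ A : TTGraph, IsSP A ∧ (k : ℕ∞) ≤ A.G.egirth ∧
        ¬ Choosable A.G ⌈r * m⌉₊ m) := by
  have hk' : 4 * q ≤ k + 1 ∧ k ≤ 4 * q + 2 := by
    simp only [Set.mem_insert_iff, Set.mem_singleton_iff] at hk
    lia
  refine ⟨fun m _ A hA hg => ?_, fun r hr => ?_⟩
  · obtain ⟨e, hceil, he⟩ := exists_ceil_eq_two_mul_add hq m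
    rw [hceil]
    exact hA.choosable hq he hk'.1 hg
  · obtain ⟨n, hn⟩ := exists_ceil_mul_le_two_mul_add hq hr
    obtain ⟨A, hA, hg, hc⟩ := TTGraph.exists_not_choosable hq (Nat.lt_succ_self (q * n))
    exact ⟨q * n + 1, Nat.succ_pos _, A, hA, le_trans (by exact_mod_cast hk'.2) hg,
      fun h => hc (h.mono hn)⟩
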